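/- For every positive integer n: sum_{i=1}^{2n} [2n choose i]_q * (-1)^{i-1} (-1;q)_i * q^i/(1-q^{i+2}) = sum_{i=1}^n 2 q^{2i-1}(1-q) / ((1+q^2)(1-q^{2i-1})(1-q^{2i+1})). -/

import Mathlib

open Finset

variable {F : Type*} [Field F]

/-- `(q;q)_n = (1-q)(1-q^2)...(1-q^n)` -/
def qfac (q : F) (n : ℕ) : F := ∏ j ∈ Finset.range n, (1 - q ^ (j + 1))

/-- `(z;q)_k = (1-z)(1-zq)...(1-zq^{k-1})` -/
def qpoch (z q : F) (k : ℕ) : F := ∏ j ∈ Finset.range k, (1 - z * q ^ j)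

/-- Gaussian binomial coefficient `[n choose k]_q` -/
def qbinom (q : F) (n k : ℕ) : F := qfac q n / (qfac q k * qfac q (n - k))

/-- Sum over weakly increasing `m`-tuples `lo ≤ i_1 ≤ ... ≤ i_m ≤ n` of
`∏_j q^{i_j}/(1-q^{i_j})` (equal to `1` when `m = 0`). -/
def chainSum (q : F) (lo n m : ℕ) : F :=
  ∑ c ∈ Finset.univ.filter (fun c : Fin m → Fin (n + 1) =>
      (∀ j k : Fin m, j ≤ k → c j ≤ c k) ∧ ∀ j, lo ≤ (c j : ℕ)),
    ∏ j, q ^ (c j : ℕ) / (1 - q ^ (c j : ℕ))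

/-- Complete homogeneous symmetric function `h_m` of the variables
`x lo, x (lo+1), ..., x n`. -/
def hSum {R : Type*} [CommRing R] (x : ℕ → R) (lo n m : ℕ) : R :=
  ∑ c ∈ Finset.univ.filter (fun c : Fin m → Fin (n + 1) =>
      (∀ j k : Fin m, j ≤ k → c j ≤ c k) ∧ ∀ j, lo ≤ (c j : ℕ)),
    ∏ j, x (c j : ℕ)

theorem qfac_succ' (q : F) (n : ℕ) : qfac q (n + 1) = qfac q n * (1 - q ^ (n + 1)) := by
  simp [qfac, Finset.prod_range_succ]

theorem qfac_ne' (q : F) (hq : ∀ i : ℕ, 1 ≤ i → q ^ i ≠ 1) (n : ℕ) : qfac q n ≠ 0 := by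
  unfold qfac
  refine Finset.prod_ne_zero_iff.mpr fun j _ => ?_
  exact sub_ne_zero.mpr (hq (j + 1) (by omega)).symm

theorem qbinom_zero' (q : F) (hq : ∀ i : ℕ, 1 ≤ i → q ^ i ≠ 1) (n : ℕ) : qbinom q n 0 = 1 := by
  have := qfac_ne' q hq n
  have h0 : qfac q 0 = 1 := by simp [qfac]
  simp [qbinom, h0, this]

theorem qbinom_self' (q : F) (hq : ∀ i : ℕ, 1 ≤ i → q ^ i ≠ 1) (n : ℕ) : qbinom q n n = 1 := by
  have := qfac_ne' q hq n
  have h0 : qfac q 0 = 1 := by simp [qfac]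
  simp [qbinom, h0, this]

theorem qbinom_pascal' (q : F) (hq : ∀ i : ℕ, 1 ≤ i → q ^ i ≠ 1) (N k : ℕ) (h : k + 1 ≤ N) :
    qbinom q (N + 1) (k + 1) = q ^ (k + 1) * qbinom q N (k + 1) + qbinom q N k := by
  obtain ⟨m, rfl⟩ := Nat.exists_eq_add_of_le h
  have e1 : k + 1 + m + 1 - (k + 1) = m + 1 := by omega
  have e2 : k + 1 + m - (k + 1) = m := by omega
  have e3 : k + 1 + m - k = m + 1 := by omega
  have a1 := qfac_ne' q hq k
  have a2 := qfac_ne' q hq m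
  have a3 : 1 - q ^ (k + 1) ≠ 0 := sub_ne_zero.mpr (hq _ (by omega)).symm
  have a4 : 1 - q ^ (m + 1) ≠ 0 := sub_ne_zero.mpr (hq _ (by omega)).symm
  unfold qbinom
  rw [e1, e2, e3, qfac_succ' q (k + 1 + m), qfac_succ' q k, qfac_succ' q m]
  field_simp
  ring

theorem qbinom_up' (q : F) (hq : ∀ i : ℕ, 1 ≤ i → q ^ i ≠ 1) (N k : ℕ) (h : k ≤ N) :
    (1 - q ^ (N + 1)) * qbinom q N k = (1 - q ^ (N + 1 - k)) * qbinom q (N + 1) k := by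
  obtain ⟨m, rfl⟩ := Nat.exists_eq_add_of_le h
  have e1 : k + m + 1 - k = m + 1 := by omega
  have e2 : k + m - k = m := by omega
  have a1 := qfac_ne' q hq k
  have a2 := qfac_ne' q hq m
  have a4 : 1 - q ^ (m + 1) ≠ 0 := sub_ne_zero.mpr (hq _ (by omega)).symm
  unfold qbinom
  rw [e1, e2, qfac_succ' q (k + m), qfac_succ' q m]
  field_simp

/-- The coefficient `(-1)^i (-1;q)_i`. -/
def bco (q : F) (i : ℕ) : F := (-1) ^ i * ∏ j ∈ Finset.range i, (1 + q ^ j)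

theorem bco_succ (q : F) (i : ℕ) : bco q (i + 1) = - bco q i * (1 + q ^ i) := by
  simp only [bco, Finset.prod_range_succ]; ring

theorem partial_f (q : F) (hq : ∀ i : ℕ, 1 ≤ i → q ^ i ≠ 1) (N k : ℕ) (h : k ≤ N) :
    ∑ i ∈ Finset.range (k + 1), (qbinom q (N + 1) i + qbinom q N i) * bco q i
      = - qbinom q N k * bco q (k + 1) := by
  induction k with
  | zero =>
    simp [qbinom_zero' q hq, bco]
  | succ k ih =>
    rw [Finset.sum_range_succ, ih (by omega), qbinom_pascal' q hq N k h, bco_succ q (k + 1)]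
    ring

theorem f_one (q : F) (hq : ∀ i : ℕ, 1 ≤ i → q ^ i ≠ 1) (N : ℕ) :
    ∑ i ∈ Finset.range (N + 1), qbinom q N i * bco q i = (-1) ^ N := by
  induction N with
  | zero => simp [qbinom_zero' q hq, bco]
  | succ N ih =>
    have := partial_f q hq N N le_rfl
    simp only [add_mul, Finset.sum_add_distrib] at this
    rw [ih, qbinom_self' q hq] at this
    rw [Finset.sum_range_succ, qbinom_self' q hq, pow_succ]
    linear_combination this

def SS (q : F) (N : ℕ) : F :=
  ∑ i ∈ Finset.range (N + 1), qbinom q N i * bco q i * (q ^ i / (1 - q ^ (i + 2)))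

theorem SS_rec (q : F) (hq : ∀ i : ℕ, 1 ≤ i → q ^ i ≠ 1) (N : ℕ) :
    (1 - q ^ (N + 3)) * SS q (N + 1) = (1 - q ^ (N + 1)) * SS q N + q ^ (N + 1) * (-1) ^ (N + 1) := by
  have h1 : (1 - q ^ (N + 1)) * SS q N = ∑ i ∈ Finset.range (N + 1 + 1),
      (1 - q ^ (N + 1 - i)) * qbinom q (N + 1) i * bco q i * (q ^ i / (1 - q ^ (i + 2))) := by
    rw [Finset.sum_range_succ, SS, Finset.mul_sum]
    simp only [Nat.sub_self, pow_zero, sub_self, zero_mul, add_zero]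
    refine Finset.sum_congr rfl fun i hi => ?_
    rw [← qbinom_up' q hq N i (by simp at hi; omega)]
    ring
  rw [h1, ← f_one q hq, SS, Finset.mul_sum, Finset.mul_sum, ← Finset.sum_add_distrib]
  refine Finset.sum_congr rfl fun i hi => ?_
  obtain ⟨m, hm⟩ := Nat.exists_eq_add_of_le (show i ≤ N + 1 by simp at hi; omega)
  have e : N + 1 - i = m := by omega
  have e3 : N + 3 = i + m + 2 := by omega
  have a : 1 - q ^ (i + 2) ≠ 0 := sub_ne_zero.mpr (hq _ (by omega)).symm
  rw [e, e3, hm]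
  field_simp
  ring

theorem SS_even (q : F) (hq : ∀ i : ℕ, 1 ≤ i → q ^ i ≠ 1) (h2 : q ^ 2 ≠ -1) (n : ℕ) :
    SS q (2 * n) = 1 / (1 - q ^ 2) - ∑ i ∈ Finset.Icc 1 n,
          2 * q ^ (2 * i - 1) * (1 - q)
            / ((1 + q ^ 2) * (1 - q ^ (2 * i - 1)) * (1 - q ^ (2 * i + 1))) ∧
    SS q (2 * n) = 1 / (1 - q ^ 2) - 2 * q * (1 - q ^ (2 * n)) /
      ((1 - q ^ 2) * (1 + q ^ 2) * (1 - q ^ (2 * n + 1))) := by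
  have b2 : 1 - q ^ 2 ≠ 0 := sub_ne_zero.mpr (hq _ (by omega)).symm
  have b1 : 1 - q ≠ 0 := by simpa using sub_ne_zero.mpr (hq 1 (by omega)).symm
  have b4 : 1 + q ^ 2 ≠ 0 := fun h => h2 (by linear_combination h)
  induction n with
  | zero => simp [SS, qbinom_zero' q hq, bco]
  | succ n ih =>
    obtain ⟨i1, i2⟩ := ih
    have c1 : 1 - q ^ (2 * n + 1) ≠ 0 := sub_ne_zero.mpr (hq _ (by omega)).symm
    have c2 : 1 - q ^ (2 * n + 2) ≠ 0 := sub_ne_zero.mpr (hq _ (by omega)).symm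
    have c3 : 1 - q ^ (2 * n + 3) ≠ 0 := sub_ne_zero.mpr (hq _ (by omega)).symm
    have c4 : 1 - q ^ (2 * n + 4) ≠ 0 := sub_ne_zero.mpr (hq _ (by omega)).symm
    have r1 := SS_rec q hq (2 * n)
    have r2 := SS_rec q hq (2 * n + 1)
    have p1 : (-1 : F) ^ (2 * n + 1) = -1 := by simp [pow_succ, pow_mul]
    have p2 : (-1 : F) ^ (2 * n + 1 + 1) = 1 := by simp [pow_succ, pow_mul]
    rw [p1] at r1
    rw [p2] at r2
    have key : SS q (2 * (n + 1)) = 1 / (1 - q ^ 2) - 2 * q * (1 - q ^ (2 * (n + 1))) /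
      ((1 - q ^ 2) * (1 + q ^ 2) * (1 - q ^ (2 * (n + 1) + 1))) := by
      have m : (1 - q ^ (2 * n + 4)) * (1 - q ^ (2 * n + 3)) * SS q (2 * (n + 1)) =
          (1 - q ^ (2 * n + 2)) * (1 - q ^ (2 * n + 1)) * SS q (2 * n)
          - (1 - q ^ (2 * n + 2)) * q ^ (2 * n + 1) + (1 - q ^ (2 * n + 3)) * q ^ (2 * n + 2) := by
        rw [show 2 * (n + 1) = 2 * n + 1 + 1 by ring]
        linear_combination (1 - q ^ (2 * n + 3)) * r2 + (1 - q ^ (2 * n + 2)) * r1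
      apply mul_left_cancel₀ (mul_ne_zero c4 c3)
      rw [m, i2]
      rw [show 2 * (n + 1) + 1 = 2 * n + 3 by ring]
      field_simp
      ring
    refine ⟨?_, key⟩
    rw [Finset.sum_Icc_succ_top (by omega), ← sub_sub, ← i1, key, i2]
    rw [show 2 * (n + 1) + 1 = 2 * n + 3 by ring, show 2 * (n + 1) - 1 = 2 * n + 1 by omega]
    field_simp
    ring

theorem fu_lascoux_eq15 (q : F) (n : ℕ) (hn : 1 ≤ n)
    (hq : ∀ i : ℕ, 1 ≤ i → q ^ i ≠ 1) (h2 : q ^ 2 ≠ -1) :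
    ∑ i ∈ Finset.Icc 1 (2 * n),
        qbinom q (2 * n) i * ((-1) ^ (i + 1) * ∏ j ∈ Finset.range i, (1 + q ^ j))
          * q ^ i / (1 - q ^ (i + 2))
      = ∑ i ∈ Finset.Icc 1 n,
          2 * q ^ (2 * i - 1) * (1 - q)
            / ((1 + q ^ 2) * (1 - q ^ (2 * i - 1)) * (1 - q ^ (2 * i + 1))) := by
  have h := (SS_even q hq h2 n).1
  have b : SS q (2 * n) = 1 / (1 - q ^ 2) - ∑ i ∈ Finset.Icc 1 (2 * n),
        qbinom q (2 * n) i * ((-1) ^ (i + 1) * ∏ j ∈ Finset.range i, (1 + q ^ j))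
          * q ^ i / (1 - q ^ (i + 2)) := by
    rw [SS, Finset.range_eq_Ico, Finset.sum_eq_sum_Ico_succ_bot (by omega), sub_eq_add_neg (1 / (1 - q ^ 2)),
      ← Finset.sum_neg_distrib]
    congr 1
    · simp [qbinom_zero' q hq, bco]
    · refine Finset.sum_congr (by ext; simp <;> omega) fun i _ => ?_
      rw [bco, pow_succ]
      ring
  linear_combination b - h
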